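/- arXiv:1809.09676 — 2 statements merged into one kernel-verified Lean document; each statement's English description precedes it below -/
import Mathlib

section
/- If a < b are coprime and B is the balanced number of chips (the smallest n such that the right part of the final state φ(n)^R is a settlement ξ_k with k > Te_{c−1}+1), then for all n ≥ B, with f_0, f_1 the total origin and vertex-1 firing counts to reach φ(n) and f_0', f_1' those for φ(n+1): f_0' − f_1' = f_0 − f_1 = c = ⌈a/(b−a)⌉. -/
/-- Firing at vertex `i` in the `a`-`b` chip-firing game on `ℤ`:
requires at least `a+b` chips at `i`, sends `a` chips to `i-1` and `b` chips to `i+1`. -/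
def fireAt (a b : ℕ) (i : ℤ) (σ σ' : ℤ →₀ ℕ) : Prop :=
  a + b ≤ σ i ∧
  σ' (i - 1) = σ (i - 1) + a ∧
  σ' i = σ i - (a + b) ∧
  σ' (i + 1) = σ (i + 1) + b ∧
  ∀ m : ℤ, m ≠ i - 1 → m ≠ i → m ≠ i + 1 → σ' m = σ m

/-- Reachability by a finite sequence of firings. -/
def Reaches (a b : ℕ) : (ℤ →₀ ℕ) → (ℤ →₀ ℕ) → Prop :=
  Relation.ReflTransGen (fun σ σ' => ∃ i, fireAt a b i σ σ')

/-- Initial state: `n` chips at the origin. -/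
noncomputable def initState (n : ℕ) : ℤ →₀ ℕ := Finsupp.single 0 n

/-- `Leads a b σ L σ'`: the list `L` of vertices, fired in order (each legal),
leads from state `σ` to state `σ'`. -/
inductive Leads (a b : ℕ) : (ℤ →₀ ℕ) → List ℤ → (ℤ →₀ ℕ) → Prop
  | nil (σ : ℤ →₀ ℕ) : Leads a b σ [] σ
  | cons {σ τ σ' : ℤ →₀ ℕ} {i : ℤ} {L : List ℤ} :
      fireAt a b i σ τ → Leads a b τ L σ' → Leads a b σ (i :: L) σ'

/-- The state polynomial `S_σ(t) = Σ_m s_m t^{-m}` evaluated at `t`. -/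
noncomputable def statePoly (σ : ℤ →₀ ℕ) (t : ℚ) : ℚ :=
  ∑ m ∈ σ.support, (σ m : ℚ) * t ^ (-m)

/-- The left part `S_{σ^L}(t) = Σ_{m ≤ 0} s_m t^{-m}`. -/
noncomputable def statePolyL (σ : ℤ →₀ ℕ) (t : ℚ) : ℚ :=
  ∑ m ∈ σ.support.filter (fun m => m ≤ 0), (σ m : ℚ) * t ^ (-m)

/-- The right part `S_{σ^R}(t) = Σ_{m ≥ 1} s_m t^{-m}`. -/
noncomputable def statePolyR (σ : ℤ →₀ ℕ) (t : ℚ) : ℚ :=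
  ∑ m ∈ σ.support.filter (fun m => 1 ≤ m), (σ m : ℚ) * t ^ (-m)

/-- `M_σ = Σ_m m·s_m`. -/
def Mval (σ : ℤ →₀ ℕ) : ℤ := ∑ m ∈ σ.support, m * (σ m : ℤ)

/-- A final (stable) state of the game started with `n` chips at the origin. -/
def IsFinalState (a b n : ℕ) (σ : ℤ →₀ ℕ) : Prop :=
  Reaches a b (initState n) σ ∧ ∀ i : ℤ, σ i < a + b

/-- Firing at vertex `i ≥ 1` on the right part: chips sent to vertex `0` are discarded. -/
def rfireAt (a b : ℕ) (i : ℤ) (σ σ' : ℤ →₀ ℕ) : Prop :=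
  1 ≤ i ∧ a + b ≤ σ i ∧
  (∀ m : ℤ, m ≤ 0 → σ' m = 0) ∧
  σ' i = σ i - (a + b) ∧
  σ' (i + 1) = σ (i + 1) + b ∧
  (1 ≤ i - 1 → σ' (i - 1) = σ (i - 1) + a) ∧
  ∀ m : ℤ, 1 ≤ m → m ≠ i - 1 → m ≠ i → m ≠ i + 1 → σ' m = σ m

/-- `Settles a b σ τ`: `τ` is a stable configuration obtained from `σ`
by firings among the vertices `≥ 1`. -/
def Settles (a b : ℕ) (σ τ : ℤ →₀ ℕ) : Prop :=
  Relation.ReflTransGen (fun x y => ∃ i, rfireAt a b i x y) σ τ ∧ ∀ i : ℤ, τ i < a + b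

/-- The settlement sequence: `ξ 0` is empty and `ξ (k+1)` is obtained from `ξ k`
by adding `b` chips at vertex `1` and stabilizing within the vertices `≥ 1`. -/
def SettlementSeq (a b : ℕ) (ξ : ℕ → ℤ →₀ ℕ) : Prop :=
  ξ 0 = 0 ∧ ∀ k : ℕ, Settles a b (ξ k + Finsupp.single 1 b) (ξ (k + 1))

/-- `RLeads a b σ L σ'`: the list `L` of vertices fired in order (right-part firings)
leads from `σ` to `σ'`. -/
inductive RLeads (a b : ℕ) : (ℤ →₀ ℕ) → List ℤ → (ℤ →₀ ℕ) → Prop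
  | nil (σ : ℤ →₀ ℕ) : RLeads a b σ [] σ
  | cons {σ τ σ' : ℤ →₀ ℕ} {i : ℤ} {L : List ℤ} :
      rfireAt a b i σ τ → RLeads a b τ L σ' → RLeads a b σ (i :: L) σ'

/-- The `m`-th tetrahedral number. -/
def Te (m : ℕ) : ℕ := m * (m + 1) * (m + 2) / 6

/-!
Firing changes a state by a linear operator applied to the odometer, the function counting the
firings at each vertex. The right part of a state determines its odometer on `m ≥ 0`: far to the
right the odometer vanishes, and the linear relation recovers `u (m - 1)` from `u m` and
`u (m + 1)`. Hence a final state whose right part is `ξ k` has seen exactly `k` firings at the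
origin, and by the least action principle that number does not decrease when chips are added.

Once the origin has fired `k ≥ c (c + 1) / 2` times, the drop `u 0 - u 1` is pinned from both sides.
Stability gives `u m - u (m + 1) ≤ c` for all `m ≥ 0`, by descending induction on `m`. Conversely,
the staircase starting at height `k` with drops `c, c - 1, …, 2, 1, 1, …, 1, 0, …` stabilizes the
vertices `m ≥ 1`, because its drops are at most `c` and decrease by at most `1` from each vertex to
the next; so by least action it bounds the odometer there, and `u 1 ≤ k - c`.
-/

/-- The net number of chips received by each vertex when every vertex `i` fires `u i` times. -/
def netGain (a b : ℤ) : (ℤ → ℤ) →ₗ[ℤ] (ℤ → ℤ) where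
  toFun u m := b * (u (m - 1) - u m) - a * (u m - u (m + 1))
  map_add' u v := by ext m; simp only [Pi.add_apply]; ring
  map_smul' r u := by ext m; simp only [Pi.smul_apply, smul_eq_mul, RingHom.id_apply]; ring

lemma netGain_apply (a b : ℤ) (u : ℤ → ℤ) (m : ℤ) :
    netGain a b u m = b * (u (m - 1) - u m) - a * (u m - u (m + 1)) := rfl

/-- The odometer of a firing sequence: how often each vertex is fired. It is `ℤ`-valued so that
odometers can be subtracted and fed to `netGain`. -/
def odometer (L : List ℤ) (i : ℤ) : ℤ := L.count i

lemma odometer_nonneg (L : List ℤ) (i : ℤ) : 0 ≤ odometer L i := Int.natCast_nonneg _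

lemma odometer_nil : odometer [] = 0 := by
  ext i
  simp [odometer]

lemma odometer_cons (i : ℤ) (L : List ℤ) : odometer (i :: L) = odometer L + Pi.single i 1 := by
  ext m
  simp only [odometer, List.count_cons, Pi.add_apply, Pi.single_apply, beq_iff_eq]
  split_ifs <;> simp_all

lemma odometer_eventually_eq_zero (L : List ℤ) : ∀ᶠ m in Filter.atTop, odometer L m = 0 := by
  obtain ⟨N, hN⟩ := L.toFinset.bddAbove
  filter_upwards [Filter.eventually_gt_atTop N] with m hm
  have hmem : m ∉ L := fun h => hm.not_ge (hN (List.mem_toFinset.2 h))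
  simp [odometer, List.count_eq_zero.2 hmem]

section Firing

variable {a b : ℕ} {i : ℤ} {σ τ σ' τ' : ℤ →₀ ℕ} {L L' : List ℤ}

lemma fireAt.cast_apply (h : fireAt a b i σ τ) (m : ℤ) :
    (τ m : ℤ) = σ m + netGain a b (Pi.single i 1) m := by
  obtain ⟨hi, hleft, hself, hright, hother⟩ := h
  simp only [netGain_apply, Pi.single_apply]
  grind

lemma rfireAt.cast_apply (h : rfireAt a b i σ τ) {m : ℤ} (hm : 1 ≤ m) :
    (τ m : ℤ) = σ m + netGain a b (Pi.single i 1) m := by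
  obtain ⟨-, hi, -, hself, hright, hleft, hother⟩ := h
  simp only [netGain_apply, Pi.single_apply]
  grind

lemma Leads.cast_apply (h : Leads a b σ L τ) (m : ℤ) :
    (τ m : ℤ) = σ m + netGain a b (odometer L) m := by
  induction h with
  | nil σ => simp [odometer_nil]
  | cons hfire _ ih =>
    rw [ih, hfire.cast_apply, odometer_cons, map_add, Pi.add_apply]
    ring

lemma Reaches.exists_leads (h : Reaches a b σ τ) : ∃ L, Leads a b σ L τ := by
  induction h using Relation.ReflTransGen.head_induction_on with
  | refl => exact ⟨[], .nil _⟩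
  | head hfire _ ih =>
    obtain ⟨i, hi⟩ := hfire
    obtain ⟨L, hL⟩ := ih
    exact ⟨i :: L, .cons hi hL⟩

lemma one_le_of_add_netGain_lt {u : ℤ → ℤ} (hu : ∀ j, 0 ≤ u j) (hi : a + b ≤ σ i)
    (hlt : σ i + netGain a b u i < a + b) : 1 ≤ u i := by
  by_contra! hui
  have hui0 : u i = 0 := le_antisymm (by omega) (hu i)
  have hleft : 0 ≤ b * u (i - 1) := mul_nonneg (by positivity) (hu _)
  have hright : 0 ≤ a * u (i + 1) := mul_nonneg (by positivity) (hu _)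
  have hi' : (a + b : ℤ) ≤ σ i := mod_cast hi
  rw [netGain_apply, hui0] at hlt
  linarith

/-- A local form of the least action principle: `u` has to stabilize only those vertices at which
it is not already known to dominate the odometer. -/
lemma Leads.odometer_le (h : Leads a b σ L τ) {u : ℤ → ℤ} (hu : ∀ i, 0 ≤ u i)
    (hstab : ∀ i, odometer L i ≤ u i ∨ σ i + netGain a b u i < a + b) (i : ℤ) :
    odometer L i ≤ u i := by
  induction h generalizing u i with
  | nil σ => simpa [odometer_nil] using hu i
  | @cons σ τ _ j L hfire _ ih =>
    have hj : 1 ≤ u j := by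
      rcases hstab j with hle | hlt
      · have := odometer_nonneg L j
        simp only [odometer_cons, Pi.add_apply, Pi.single_eq_same] at hle
        omega
      · exact one_le_of_add_netGain_lt hu hfire.1 hlt
    have hle := @ih (u - Pi.single j 1)
      (fun m => by
        have := hu m
        simp only [Pi.sub_apply, Pi.single_apply]
        grind)
      (fun m => by
        refine (hstab m).imp (fun hm => ?_) (fun hm => ?_)
        · simpa [odometer_cons, le_sub_iff_add_le] using hm
        · rw [hfire.cast_apply, map_sub, Pi.sub_apply]
          linarith) i
    simpa [odometer_cons, le_sub_iff_add_le] using hle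

lemma Leads.odometer_mono (h : Leads a b σ L τ) (h' : Leads a b σ' L' τ') (hσ : σ ≤ σ')
    (hτ' : ∀ i, τ' i < a + b) (i : ℤ) : odometer L i ≤ odometer L' i := by
  refine h.odometer_le (odometer_nonneg L') (fun j => Or.inr ?_) i
  have hσj : (σ j : ℤ) ≤ σ' j := mod_cast hσ j
  have hτj : (τ' j : ℤ) < a + b := mod_cast hτ' j
  linarith [h'.cast_apply j]

end Firing

section RightOdometer

variable {a b : ℕ} {σ τ : ℤ →₀ ℕ} {u v : ℤ → ℤ}

/-- `u` is an odometer producing the right part of `σ` from an empty right half-line: the firings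
at the vertices `m ≥ 1`, together with `u 0` firings at the origin. The values of `u` on `m < 0`
are irrelevant. -/
structure IsRightOdometer (a b : ℕ) (u : ℤ → ℤ) (σ : ℤ →₀ ℕ) : Prop where
  eventually_eq_zero : ∀ᶠ m in Filter.atTop, u m = 0
  cast_apply : ∀ m : ℤ, 1 ≤ m → (σ m : ℤ) = netGain a b u m

lemma Leads.isRightOdometer {L : List ℤ} (h : Leads a b σ L τ) (hσ : ∀ m : ℤ, 1 ≤ m → σ m = 0) :
    IsRightOdometer a b (odometer L) τ where
  eventually_eq_zero := odometer_eventually_eq_zero L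
  cast_apply m hm := by simp [h.cast_apply, hσ m hm]

lemma IsRightOdometer.add_single (h : IsRightOdometer a b u σ) {i : ℤ}
    (hτ : ∀ m : ℤ, 1 ≤ m → (τ m : ℤ) = σ m + netGain a b (Pi.single i 1) m) :
    IsRightOdometer a b (u + Pi.single i 1) τ where
  eventually_eq_zero := by
    filter_upwards [h.eventually_eq_zero, Filter.eventually_gt_atTop i] with m hum hm
    simp [hum, hm.ne']
  cast_apply m hm := by rw [hτ m hm, h.cast_apply m hm, map_add, Pi.add_apply]

lemma IsRightOdometer.exists_of_settles (h : IsRightOdometer a b u σ) (hτ : Settles a b σ τ) :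
    ∃ v, v 0 = u 0 ∧ IsRightOdometer a b v τ := by
  obtain ⟨hreach, -⟩ := hτ
  induction hreach with
  | refl => exact ⟨u, rfl, h⟩
  | tail _ hfire ih =>
    obtain ⟨i, hi⟩ := hfire
    obtain ⟨v, hv0, hv⟩ := ih
    have hi0 : (0 : ℤ) ≠ i := by have := hi.1; omega
    exact ⟨v + Pi.single i 1, by simp [hv0, hi0], hv.add_single fun m hm => hi.cast_apply hm⟩

lemma SettlementSeq.exists_isRightOdometer {ξ : ℕ → ℤ →₀ ℕ} (hξ : SettlementSeq a b ξ) (k : ℕ) :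
    ∃ u : ℤ → ℤ, u 0 = k ∧ IsRightOdometer a b u (ξ k) := by
  induction k with
  | zero => exact ⟨0, by simp, .of_forall fun _ => rfl, fun m _ => by simp [hξ.1]⟩
  | succ k ih =>
    obtain ⟨u, hu0, hu⟩ := ih
    have hadd : IsRightOdometer a b (u + Pi.single 0 1) (ξ k + Finsupp.single 1 b) :=
      hu.add_single fun m hm => by
        simp only [Finsupp.add_apply, Finsupp.single_apply, netGain_apply, Pi.single_apply]
        grind
    obtain ⟨v, hv0, hv⟩ := hadd.exists_of_settles (hξ.2 k)
    exact ⟨v, by simp [hv0, hu0], hv⟩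

lemma decreasing_induction_of_eventually_atTop {P : ℤ → Prop} (hP : ∀ᶠ m in Filter.atTop, P m)
    (step : ∀ m, 0 ≤ m → P (m + 1) → P m) : P 0 := by
  have hP' : ∀ᶠ n : ℕ in Filter.atTop, P n := tendsto_natCast_atTop_atTop.eventually hP
  exact Nat.decreasing_induction_of_infinite (P := fun n : ℕ => P n)
    (fun n hn => step n (by positivity) (mod_cast hn))
    (Nat.frequently_atTop_iff_infinite.1 hP'.frequently) 0

lemma IsRightOdometer.apply_zero_eq (hb : 0 < b) (hu : IsRightOdometer a b u σ)
    (hv : IsRightOdometer a b v τ) (hστ : ∀ m : ℤ, 1 ≤ m → σ m = τ m) : u 0 = v 0 := by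
  refine (decreasing_induction_of_eventually_atTop
    (P := fun m => u m = v m ∧ u (m + 1) = v (m + 1)) ?_ ?_).1
  · obtain ⟨N, hN⟩ := Filter.eventually_atTop.1 (hu.eventually_eq_zero.and hv.eventually_eq_zero)
    refine Filter.eventually_atTop.2 ⟨N, fun m hm => ⟨?_, ?_⟩⟩
    · rw [(hN m hm).1, (hN m hm).2]
    · rw [(hN (m + 1) (by omega)).1, (hN (m + 1) (by omega)).2]
  · rintro m hm ⟨h₁, h₂⟩
    refine ⟨?_, h₁⟩
    have hgain : netGain a b u (m + 1) = netGain a b v (m + 1) := by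
      rw [← hu.cast_apply _ (by omega), ← hv.cast_apply _ (by omega), hστ _ (by omega)]
    rw [netGain_apply, netGain_apply, h₁, h₂, add_sub_cancel_right] at hgain
    exact mul_left_cancel₀ (Int.natCast_ne_zero.2 hb.ne') (by linarith)

lemma IsRightOdometer.drop_le (hu : IsRightOdometer a b u σ)
    (hσ : ∀ m : ℤ, 1 ≤ m → σ m < a + b) {c : ℕ} (hc : (a : ℤ) ≤ c * (b - a)) :
    u 0 - u 1 ≤ c := by
  refine decreasing_induction_of_eventually_atTop (P := fun m => u m - u (m + 1) ≤ c) ?_ ?_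
  · obtain ⟨N, hN⟩ := Filter.eventually_atTop.1 hu.eventually_eq_zero
    refine Filter.eventually_atTop.2 ⟨N, fun m hm => ?_⟩
    simp [hN m hm, hN (m + 1) (by omega)]
  · intro m hm hdrop
    have hlt : netGain a b u (m + 1) < a + b := by
      rw [← hu.cast_apply _ (by omega)]
      exact mod_cast hσ _ (by omega)
    rw [netGain_apply, add_sub_cancel_right] at hlt
    refine Int.lt_add_one_iff.1 (lt_of_mul_lt_mul_left (a := (b : ℤ)) ?_ (by positivity))
    calc (b : ℤ) * (u m - u (m + 1)) < a + b + a * (u (m + 1) - u (m + 1 + 1)) := by linarith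
      _ ≤ a + b + a * c := by gcongr
      _ ≤ b * (c + 1) := by linarith

end RightOdometer

section Staircase

variable {a b c k : ℕ}

lemma choose_succ_two (n : ℕ) : (n + 1).choose 2 = n + n.choose 2 := by
  rw [Nat.choose_succ_succ' n 1, Nat.choose_one_right]

/-- The comparison odometer on the right half-line: it starts at height `k` and drops by
`c, c - 1, …, 2, 1, 1, …` until it reaches `0`, where truncated subtraction keeps it. -/
def staircase (c k : ℕ) : ℕ → ℕ
  | 0 => k
  | m + 1 => staircase c k m - max (c - m) 1

lemma choose_two_le_staircase (hk : (c + 1).choose 2 ≤ k) (m : ℕ) :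
    (c + 1 - m).choose 2 ≤ staircase c k m := by
  induction m with
  | zero => exact hk
  | succ m ih =>
    rcases lt_or_ge m c with hm | hm
    · obtain ⟨d, rfl⟩ := Nat.exists_eq_add_of_lt hm
      have hd : m + d + 1 + 1 - m = d + 1 + 1 := by omega
      have hd' : m + d + 1 + 1 - (m + 1) = d + 1 := by omega
      rw [hd, choose_succ_two] at ih
      rw [hd', staircase]
      omega
    · simp [show c + 1 - (m + 1) = 0 by omega]

lemma staircase_sub_le (hc : 1 ≤ c) (m : ℕ) : staircase c k m - staircase c k (m + 1) ≤ c := by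
  rw [staircase]
  omega

lemma staircase_sub_le_add_one (hk : (c + 1).choose 2 ≤ k) (m : ℕ) :
    staircase c k m - staircase c k (m + 1) ≤
      staircase c k (m + 1) - staircase c k (m + 2) + 1 := by
  have hheight : c - (m + 1) ≤ staircase c k (m + 1) := by
    refine le_trans ?_ (choose_two_le_staircase hk (m + 1))
    rcases lt_or_ge m c with hm | hm
    · rw [show c + 1 - (m + 1) = c - (m + 1) + 1 by omega, choose_succ_two]
      exact Nat.le_add_right _ _
    · simp [show c - (m + 1) = 0 by omega]
  have h₁ : staircase c k (m + 1) = staircase c k m - max (c - m) 1 := rfl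
  have h₂ : staircase c k (m + 2) = staircase c k (m + 1) - max (c - (m + 1)) 1 := rfl
  omega

lemma staircase_stable (hab : a ≤ b) (hc : 1 ≤ c) (hcab : ((c : ℤ) - 1) * (b - a) < a)
    (hk : (c + 1).choose 2 ≤ k) (m : ℕ) :
    (b : ℤ) * (staircase c k m - staircase c k (m + 1))
      - a * (staircase c k (m + 1) - staircase c k (m + 2)) < a + b := by
  have hanti (j : ℕ) : staircase c k (j + 1) ≤ staircase c k j := Nat.sub_le _ _
  have hanti₁ : staircase c k (m + 2) ≤ staircase c k (m + 1) := hanti (m + 1)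
  have hpc : (staircase c k m - staircase c k (m + 1) : ℤ) ≤ c := by
    have := staircase_sub_le (k := k) hc m
    omega
  have hpq : (staircase c k m - staircase c k (m + 1) : ℤ) - 1 ≤
      staircase c k (m + 1) - staircase c k (m + 2) := by
    have := staircase_sub_le_add_one hk m
    have := hanti m
    omega
  have hab' : (0 : ℤ) ≤ b - a := by omega
  set p : ℤ := staircase c k m - staircase c k (m + 1)
  set q : ℤ := staircase c k (m + 1) - staircase c k (m + 2)
  calc b * p - a * q ≤ b * p - a * (p - 1) := by gcongr
    _ = (b - a) * p + a := by ring
    _ ≤ (b - a) * c + a := by gcongr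
    _ < a + b := by linarith

end Staircase

section Drop

variable {a b c : ℕ} {σ τ : ℤ →₀ ℕ} {L : List ℤ}

lemma Leads.le_odometer_drop (h : Leads a b σ L τ) (hσ : ∀ m : ℤ, 1 ≤ m → σ m = 0) (hab : a ≤ b)
    (hc : 1 ≤ c) (hcab : ((c : ℤ) - 1) * (b - a) < a) (hk : (c + 1).choose 2 ≤ L.count 0) :
    c ≤ odometer L 0 - odometer L 1 := by
  set k := L.count 0
  let u : ℤ → ℤ := fun i => if i < 0 then odometer L i else staircase c k i.toNat
  have hu_natCast (m : ℕ) : u m = staircase c k m := by simp [u]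
  have hu_nonneg (i : ℤ) : 0 ≤ u i := by
    have := odometer_nonneg L i
    dsimp only [u]
    split_ifs <;> omega
  have hu_stab (i : ℤ) : odometer L i ≤ u i ∨ σ i + netGain a b u i < a + b := by
    rcases lt_trichotomy i 0 with hi | rfl | hi
    · exact .inl (by simp [u, hi])
    · exact .inl (by simp [u, k, staircase, odometer])
    · obtain ⟨m, rfl⟩ : ∃ m : ℕ, i = m + 1 := ⟨(i - 1).toNat, by omega⟩
      have hstable := staircase_stable hab hc hcab hk m
      simp only [← hu_natCast] at hstable
      right
      rw [hσ _ (by omega), netGain_apply, add_sub_cancel_right]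
      simpa [add_assoc] using hstable
  have hle : odometer L 1 ≤ staircase c k 1 := by
    simpa [u] using h.odometer_le hu_nonneg hu_stab 1
  have hck : c ≤ k := by
    rw [choose_succ_two] at hk
    omega
  simp only [staircase, Nat.sub_zero, max_eq_left hc, Nat.cast_sub hck] at hle
  simp only [odometer] at hle ⊢
  omega

lemma Leads.odometer_drop_eq (h : Leads a b σ L τ) (hσ : ∀ m : ℤ, 1 ≤ m → σ m = 0)
    (hτ : ∀ m : ℤ, 1 ≤ m → τ m < a + b) (hab : a ≤ b) (hc : 1 ≤ c)
    (hcab : ((c : ℤ) - 1) * (b - a) < a) (habc : (a : ℤ) ≤ c * (b - a))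
    (hk : (c + 1).choose 2 ≤ L.count 0) : odometer L 0 - odometer L 1 = c :=
  ((h.isRightOdometer hσ).drop_le hτ habc).antisymm (h.le_odometer_drop hσ hab hc hcab hk)

end Drop

lemma eq_ceil_div_sub_iff {a b c : ℤ} (hab : a < b) :
    c = ⌈(a : ℚ) / ((b : ℚ) - (a : ℚ))⌉ ↔ (c - 1) * (b - a) < a ∧ a ≤ c * (b - a) := by
  have hpos : (0 : ℚ) < b - a := sub_pos.2 (mod_cast hab)
  rw [eq_comm, Int.ceil_eq_iff, lt_div_iff₀ hpos, div_le_iff₀ hpos]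
  norm_cast

lemma Te_eq_choose (m : ℕ) : Te m = (m + 2).choose 3 := by
  have h := Nat.descFactorial_eq_factorial_mul_choose (m + 2) 3
  simp only [Nat.descFactorial, Nat.factorial] at h
  rw [Te]
  refine Nat.div_eq_of_eq_mul_right (by norm_num) ?_
  simp only [Nat.add_sub_cancel, Nat.add_one_sub_one, Nat.sub_zero] at h
  linarith

lemma choose_two_le_choose_three_add_two (n : ℕ) : n.choose 2 ≤ n.choose 3 + 2 := by
  induction n with
  | zero => simp
  | succ n ih =>
    rcases lt_or_ge n 3 with hn | hn
    · interval_cases n <;> decide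
    · obtain ⟨d, rfl⟩ := Nat.exists_eq_add_of_le' hn
      have hpos : 0 < (d + 2).choose 2 := Nat.choose_pos (by omega)
      have hlin : d + 3 ≤ (d + 3).choose 2 := by
        rw [choose_succ_two (d + 2)]
        omega
      have hsucc : (d + 3 + 1).choose 3 = (d + 3).choose 2 + (d + 3).choose 3 :=
        Nat.choose_succ_succ' ..
      rw [choose_succ_two, hsucc]
      omega

lemma choose_two_le_of_Te_lt {c k : ℕ} (hk : Te (c - 1) + 1 < k) : (c + 1).choose 2 ≤ k := by
  rcases c with _ | c
  · simp
  · rw [Nat.add_sub_cancel, Te_eq_choose] at hk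
    exact (choose_two_le_choose_three_add_two (c + 2)).trans hk

lemma initState_apply_of_one_le (n : ℕ) {m : ℤ} (hm : 1 ≤ m) : initState n m = 0 :=
  Finsupp.single_eq_of_ne (by omega)

theorem stmt16_general (a b : ℕ) (ha : 0 < a) (hab : a < b)
    (c : ℕ) (hc : (c : ℤ) = ⌈(a : ℚ) / ((b : ℚ) - (a : ℚ))⌉)
    (ξ : ℕ → ℤ →₀ ℕ) (hξ : SettlementSeq a b ξ)
    (φ : ℕ → ℤ →₀ ℕ) (hφ : ∀ n : ℕ, IsFinalState a b n (φ n))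
    (B k : ℕ) (hk : (c + 1).choose 2 ≤ k) (hB : ∀ m : ℤ, 1 ≤ m → φ B m = ξ k m) :
    ∀ n : ℕ, B ≤ n → ∀ L : List ℤ, Leads a b (initState n) L (φ n) →
      (L.count 0 : ℤ) - (L.count 1 : ℤ) = c := by
  intro n hn L hL
  obtain ⟨hcab, habc⟩ := (eq_ceil_div_sub_iff (mod_cast hab)).1 hc
  have hc1 : 1 ≤ c := by
    by_contra! hc0
    rw [Nat.lt_one_iff.1 hc0, Nat.cast_zero, zero_mul] at habc
    omega
  obtain ⟨LB, hLB⟩ := (hφ B).1.exists_leads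
  obtain ⟨u, hu0, hu⟩ := hξ.exists_isRightOdometer k
  have hkB : odometer LB 0 = k :=
    ((hLB.isRightOdometer fun _ => initState_apply_of_one_le B).apply_zero_eq
      (by omega) hu hB).trans hu0
  have hBn : odometer LB 0 ≤ odometer L 0 :=
    hLB.odometer_mono hL (Finsupp.single_mono hn) (hφ n).2 0
  rw [hkB, odometer, Nat.cast_le] at hBn
  exact hL.odometer_drop_eq (fun _ => initState_apply_of_one_le n) (fun m _ => (hφ n).2 m)
    hab.le hc1 hcab habc (hk.trans hBn)

/-- If `B` is the balanced number of chips, then for all `n ≥ B`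
the firing counts satisfy `f₀' - f₁' = f₀ - f₁ = c = ⌈a/(b-a)⌉`. -/
theorem stmt16 (a b : ℕ) (ha : 0 < a) (hab : a < b) (hcop : Nat.Coprime a b)
    (c : ℕ) (hc : (c : ℤ) = ⌈(a : ℚ) / ((b : ℚ) - (a : ℚ))⌉)
    (ξ : ℕ → ℤ →₀ ℕ) (hξ : SettlementSeq a b ξ)
    (φ : ℕ → ℤ →₀ ℕ) (hφ : ∀ n : ℕ, IsFinalState a b n (φ n))
    (B : ℕ)
    (hB : (∃ k : ℕ, Te (c - 1) + 1 < k ∧ ∀ m : ℤ, 1 ≤ m → φ B m = ξ k m) ∧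
      ∀ n : ℕ, n < B →
        ¬ ∃ k : ℕ, Te (c - 1) + 1 < k ∧ ∀ m : ℤ, 1 ≤ m → φ n m = ξ k m) :
    ∀ n : ℕ, B ≤ n → ∀ L L' : List ℤ,
      Leads a b (initState n) L (φ n) → Leads a b (initState (n + 1)) L' (φ (n + 1)) →
      (L.count 0 : ℤ) - (L.count 1 : ℤ) = c ∧
      (L'.count 0 : ℤ) - (L'.count 1 : ℤ) = c := by
  obtain ⟨⟨k, hk, hkB⟩, -⟩ := hB
  have hdrop := stmt16_general a b ha hab c hc ξ hξ φ hφ B k (choose_two_le_of_Te_lt hk) hkB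
  exact fun n hn L L' hL hL' => ⟨hdrop n hn L hL, hdrop (n + 1) (by omega) L' hL'⟩
end

section
/- If a < b are coprime and n ≥ B (the balanced number), then the right part of the final state evaluated in base b/a satisfies S_{φ(n)^R}(b/a) = Σ_{m≥1} s_m (a/b)^m · (b/a)^0 = a·c, and the left part satisfies S_{φ(n)^L}(b/a) = Σ_{m≤0} s_m (b/a)^{−m} = n − a·c, where c = ⌈a/(b−a)⌉. -/
/-!
Let `u` be the odometer of a game, `u m` being the number of firings at `m`. With the drops
`d m = u (m - 1) - u m`, the number of chips at `m ≥ 1` is `b * d m - a * d (m + 1)`, so the right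
part evaluated at `b / a` telescopes to `a * d 1` and the left part to `n - a * d 1`. It remains to
see when `d 1 = c`.

In a stable state `0 ≤ d m ≤ c` and the drops fall by at most one per vertex; hence `d 1 = c` forces
`u 0 ≥ c + (c - 1) + ⋯ + 1`. Conversely, if `u 0` is at least this triangular number, the staircase
with drops `c, c - 1, …, 1, 0, …` stabilizes the half-line, so by the least action principle it
dominates `u`, and `d 1 ≥ c`. Thus `d 1 = c` is equivalent to `u 0` being at least triangular,
a condition which persists when `n` grows, because the odometer increases with `n`.
-/

open Filter Set

namespace ChipFiring

variable {a b c : ℕ}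

/-- The Laplacian of the `a`-`b` game: the net number of chips that vertex `m` receives when each
vertex `j` fires `u j` times. -/
def laplacian (a b : ℕ) (u : ℤ → ℕ) (m : ℤ) : ℤ :=
  b * u (m - 1) + a * u (m + 1) - (a + b) * u m

/-- The drop of `u` along the edge from `m - 1` to `m`. -/
def drop (u : ℤ → ℕ) (m : ℤ) : ℤ :=
  u (m - 1) - u m

/-- `IsOdometer a b S η σ u`: some firing sequence which starts in `η` and is legal on the region
`S` leads to a state `σ` and fires each vertex `m` exactly `u m` times. States are only compared
on `S`, and a vertex outside `S` may fire at any time; so `S = univ` is the game on `ℤ`, while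
`S = Ici 1` is the game on the half-line, into which a firing at `0` injects `b` chips. -/
inductive IsOdometer (a b : ℕ) (S : Set ℤ) (η : ℤ →₀ ℕ) : (ℤ →₀ ℕ) → (ℤ →₀ ℕ) → Prop
  | zero {σ : ℤ →₀ ℕ} (hσ : ∀ m ∈ S, σ m = η m) : IsOdometer a b S η σ 0
  | fire {σ σ' u : ℤ →₀ ℕ} {i : ℤ} (h : IsOdometer a b S η σ u) (hi : i ∈ S → a + b ≤ σ i)
      (hσ' : ∀ m ∈ S, (σ' m : ℤ) = σ m + laplacian a b (Finsupp.single i 1) m) :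
      IsOdometer a b S η σ' (u + Finsupp.single i 1)

/-! ### Laplacian and drops -/

lemma laplacian_add (u v : ℤ → ℕ) (m : ℤ) :
    laplacian a b (u + v) m = laplacian a b u m + laplacian a b v m := by
  simp only [laplacian, Pi.add_apply, Nat.cast_add]
  ring

lemma laplacian_single_one (i m : ℤ) :
    laplacian a b (Finsupp.single i 1) m =
      if m = i then -(a + b : ℤ) else if m = i + 1 then (b : ℤ) else
        if m = i - 1 then (a : ℤ) else 0 := by
  simp only [laplacian, Finsupp.single_apply]
  split_ifs <;> omega

lemma laplacian_le_laplacian {u v : ℤ → ℕ} {m : ℤ} (hl : u (m - 1) ≤ v (m - 1))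
    (hm : u m = v m) (hr : u (m + 1) ≤ v (m + 1)) : laplacian a b u m ≤ laplacian a b v m := by
  simp only [laplacian, hm]
  gcongr

lemma laplacian_eq_drop (u : ℤ → ℕ) (m : ℤ) :
    laplacian a b u m = b * drop u m - a * drop u (m + 1) := by
  simp only [laplacian, drop, add_sub_cancel_right]
  ring

lemma eventually_cofinite_drop_eq_zero (u : ℤ →₀ ℕ) : ∀ᶠ m in cofinite, drop u m = 0 := by
  have hu : ∀ᶠ m in cofinite, u m = 0 := u.hasFiniteSupport
  filter_upwards [hu, (sub_left_injective (b := (1 : ℤ))).tendsto_cofinite.eventually hu]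
    with m hm hm'
  simp [drop, hm, hm']

/-! ### Evaluation at `b / a` -/

lemma laplacian_mul_zpow (ha : a ≠ 0) (hb : b ≠ 0) (u : ℤ → ℕ) (m : ℤ) :
    (laplacian a b u m : ℚ) * ((b : ℚ) / a) ^ (-m) =
      a * drop u m * ((b : ℚ) / a) ^ (1 - m) - a * drop u (m + 1) * ((b : ℚ) / a) ^ (-m) := by
  have ha' : (a : ℚ) ≠ 0 := mod_cast ha
  have hb' : (b : ℚ) ≠ 0 := mod_cast hb
  rw [laplacian_eq_drop, sub_eq_neg_add 1 m, zpow_add_one₀ (div_ne_zero hb' ha')]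
  push_cast
  field_simp

lemma sum_Ico_laplacian_mul_zpow (ha : a ≠ 0) (hb : b ≠ 0) (u : ℤ → ℕ) {p q : ℤ} (hpq : p ≤ q) :
    ∑ m ∈ Finset.Ico p q, (laplacian a b u m : ℚ) * ((b : ℚ) / a) ^ (-m) =
      a * drop u p * ((b : ℚ) / a) ^ (1 - p) - a * drop u q * ((b : ℚ) / a) ^ (1 - q) := by
  induction q, hpq using Int.leInduction with
  | base => simp
  | succ q hpq ih =>
    rw [← Finset.sum_Ico_add_eq_sum_Ico_add_one hpq, ih, laplacian_mul_zpow ha hb,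
      sub_add_cancel_right]
    ring

lemma eventually_statePolyR_eq_sum_Ico (σ : ℤ →₀ ℕ) (t : ℚ) :
    ∀ᶠ N in atTop, statePolyR σ t = ∑ m ∈ Finset.Ico 1 N, (σ m : ℚ) * t ^ (-m) := by
  filter_upwards [(eventually_all_finset σ.support).2 fun m _ => eventually_gt_atTop m] with N hN
  refine Finset.sum_subset (fun m hm => ?_) fun m hm hm' => ?_
  · obtain ⟨hmσ, hm1⟩ := Finset.mem_filter.1 hm
    exact Finset.mem_Ico.2 ⟨hm1, hN m hmσ⟩
  · have hσm : σ m = 0 := by simpa [(Finset.mem_Ico.1 hm).1] using hm'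
    simp [hσm]

lemma eventually_statePolyL_eq_sum_Ico (σ : ℤ →₀ ℕ) (t : ℚ) :
    ∀ᶠ N in atBot, statePolyL σ t = ∑ m ∈ Finset.Ico N 1, (σ m : ℚ) * t ^ (-m) := by
  filter_upwards [(eventually_all_finset σ.support).2 fun m _ => eventually_le_atBot m] with N hN
  refine Finset.sum_subset (fun m hm => ?_) fun m hm hm' => ?_
  · obtain ⟨hmσ, hm0⟩ := Finset.mem_filter.1 hm
    exact Finset.mem_Ico.2 ⟨hN m hmσ, by omega⟩
  · have hm0 : m ≤ 0 := Int.lt_add_one_iff.1 (Finset.mem_Ico.1 hm).2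
    have hσm : σ m = 0 := by simpa [hm0] using hm'
    simp [hσm]

theorem statePolyR_eq_add_drop (ha : a ≠ 0) (hb : b ≠ 0) {η σ u : ℤ →₀ ℕ}
    (h : ∀ m, 1 ≤ m → (σ m : ℤ) = η m + laplacian a b u m) :
    statePolyR σ ((b : ℚ) / a) = statePolyR η ((b : ℚ) / a) + a * drop u 1 := by
  obtain ⟨N, hσ, hη, hu, hN⟩ := ((eventually_statePolyR_eq_sum_Ico σ ((b : ℚ) / a)).and <|
    (eventually_statePolyR_eq_sum_Ico η ((b : ℚ) / a)).and <|
    ((eventually_cofinite_drop_eq_zero u).filter_mono atTop_le_cofinite).and <|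
    eventually_ge_atTop 1).exists
  have hsum := sum_Ico_laplacian_mul_zpow ha hb u hN
  rw [hu, sub_self, zpow_zero, Int.cast_zero, mul_zero, zero_mul, sub_zero, mul_one] at hsum
  rw [hσ, hη, ← hsum, ← Finset.sum_add_distrib]
  refine Finset.sum_congr rfl fun m hm => ?_
  have hm' : (σ m : ℚ) = η m + laplacian a b u m := mod_cast h m (Finset.mem_Ico.1 hm).1
  rw [hm', add_mul]

theorem statePolyL_eq_sub_drop (ha : a ≠ 0) (hb : b ≠ 0) {η σ u : ℤ →₀ ℕ}
    (h : ∀ m, m ≤ 0 → (σ m : ℤ) = η m + laplacian a b u m) :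
    statePolyL σ ((b : ℚ) / a) = statePolyL η ((b : ℚ) / a) - a * drop u 1 := by
  obtain ⟨N, hσ, hη, hu, hN⟩ := ((eventually_statePolyL_eq_sum_Ico σ ((b : ℚ) / a)).and <|
    (eventually_statePolyL_eq_sum_Ico η ((b : ℚ) / a)).and <|
    ((eventually_cofinite_drop_eq_zero u).filter_mono atBot_le_cofinite).and <|
    eventually_le_atBot 1).exists
  have hsum := sum_Ico_laplacian_mul_zpow ha hb u hN
  rw [hu, sub_self, zpow_zero, Int.cast_zero, mul_zero, zero_mul, zero_sub, mul_one] at hsum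
  rw [hσ, hη, sub_eq_add_neg, ← hsum, ← Finset.sum_add_distrib]
  refine Finset.sum_congr rfl fun m hm => ?_
  have hm' : (σ m : ℚ) = η m + laplacian a b u m :=
    mod_cast h m (Int.lt_add_one_iff.1 (Finset.mem_Ico.1 hm).2)
  rw [hm', add_mul]

lemma statePolyR_congr {σ τ : ℤ →₀ ℕ} (h : ∀ m, 1 ≤ m → σ m = τ m) (t : ℚ) :
    statePolyR σ t = statePolyR τ t := by
  obtain ⟨N, hσ, hτ⟩ :=
    ((eventually_statePolyR_eq_sum_Ico σ t).and (eventually_statePolyR_eq_sum_Ico τ t)).exists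
  rw [hσ, hτ]
  exact Finset.sum_congr rfl fun m hm => by rw [h m (Finset.mem_Ico.1 hm).1]

lemma statePolyL_initState (n : ℕ) (t : ℚ) : statePolyL (initState n) t = n := by
  rw [statePolyL, initState, Finset.sum_filter_of_ne]
  · exact (Finsupp.sum_single_index (h := fun m (s : ℕ) => (s : ℚ) * t ^ (-m))
      (by simp)).trans (by simp)
  · intro m hm _
    exact (Finset.mem_singleton.1 (Finsupp.support_single_subset hm)).le

/-! ### Drops of stable states -/

lemma forall_ge_of_eventually_of_succ {P : ℤ → Prop} {k : ℤ} (hP : ∀ᶠ m in atTop, P m)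
    (hstep : ∀ m, k ≤ m → P (m + 1) → P m) (m : ℤ) (hm : k ≤ m) : P m := by
  obtain ⟨N, hN, hmN⟩ := (hP.and (eventually_ge_atTop m)).exists
  induction m, hmN using Int.leInductionDown with
  | base => exact hN
  | pred j _ ih => exact hstep _ hm (by simpa using ih (by omega))

lemma drop_nonneg (hb : 0 < b) {u : ℤ →₀ ℕ} {k : ℤ} (hu : ∀ m, k ≤ m → 0 ≤ laplacian a b u m)
    (m : ℤ) (hm : k ≤ m) : 0 ≤ drop u m := by
  refine forall_ge_of_eventually_of_succ (P := fun m => 0 ≤ drop u m) ?_ (fun j hj ih => ?_) m hm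
  · exact ((eventually_cofinite_drop_eq_zero u).filter_mono atTop_le_cofinite).mono
      fun _ h => h.ge
  · have hlap := hu j hj
    rw [laplacian_eq_drop] at hlap
    have hmul : 0 ≤ (b : ℤ) * drop u j := by
      linarith [mul_nonneg (Int.natCast_nonneg a) ih]
    exact nonneg_of_mul_nonneg_right hmul (mod_cast hb)

lemma drop_le (hc : a * (c + 1) ≤ b * c) {u : ℤ →₀ ℕ} {k : ℤ}
    (hu : ∀ m, k ≤ m → laplacian a b u m < a + b) (m : ℤ) (hm : k ≤ m) : drop u m ≤ c := by
  refine forall_ge_of_eventually_of_succ (P := fun m => drop u m ≤ c) ?_ (fun j hj ih => ?_) m hm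
  · exact ((eventually_cofinite_drop_eq_zero u).filter_mono atTop_le_cofinite).mono
      fun _ h => h.trans_le (Int.natCast_nonneg c)
  · have hlap := hu j hj
    rw [laplacian_eq_drop] at hlap
    have hc' : (a : ℤ) * (c + 1) ≤ b * c := mod_cast hc
    have hmul : (b : ℤ) * drop u j < b * (c + 1) := by
      linarith [mul_le_mul_of_nonneg_left ih (Int.natCast_nonneg a), hc']
    exact Int.lt_add_one_iff.1 (lt_of_mul_lt_mul_left hmul (Int.natCast_nonneg b))

lemma drop_le_drop_add_one (hab : a < b) {u : ℤ → ℕ} {m : ℤ}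
    (hu : laplacian a b u m < a + b) (hm : 0 ≤ drop u (m + 1)) :
    drop u m ≤ drop u (m + 1) + 1 := by
  rw [laplacian_eq_drop] at hu
  have hab' : (a : ℤ) < b := mod_cast hab
  have hmul : (b : ℤ) * drop u m < b * (drop u (m + 1) + 2) := by
    linarith [mul_le_mul_of_nonneg_right hab'.le hm]
  linarith [lt_of_mul_lt_mul_left hmul (Int.natCast_nonneg b)]

lemma choose_succ_two (n : ℕ) : (n + 1).choose 2 = n + n.choose 2 :=
  (Nat.choose_succ_succ' n 1).trans (by rw [Nat.choose_one_right])

lemma choose_two_le_of_le_drop {u : ℤ → ℕ} {k : ℤ}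
    (hu : ∀ m, k ≤ m → drop u m ≤ drop u (m + 1) + 1) {m : ℤ} (hm : k ≤ m)
    (hc : c ≤ drop u m) : (c + 1).choose 2 ≤ u (m - 1) := by
  induction c generalizing m with
  | zero => simp
  | succ c ih =>
    have hnext := ih (m := m + 1) (by omega) (by have := hu m hm; omega)
    rw [add_sub_cancel_right] at hnext
    rw [drop] at hc
    rw [choose_succ_two]
    omega

/-! ### The staircase -/

/-- The firing counts whose drops at the vertices `1, …, c` are `c, c - 1, …, 1`, and `0` beyond,
levelling off at height `K`. -/
def staircase (c K : ℕ) (m : ℤ) : ℕ :=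
  K + (c + 1 - m).toNat.choose 2

lemma drop_staircase (c K : ℕ) (m : ℤ) : drop (staircase c K) m = (c + 1 - m).toNat := by
  rw [drop, staircase, staircase]
  rcases le_or_gt m (c + 1) with h | h
  · rw [show (c + 1 - (m - 1) : ℤ).toNat = (c + 1 - m).toNat + 1 by omega, choose_succ_two]
    omega
  · have hm : (c + 1 - m : ℤ).toNat = 0 := by omega
    have hm' : (c + 1 - (m - 1) : ℤ).toNat = 0 := by omega
    simp [hm, hm']

lemma laplacian_staircase_lt (hab : a < b) (hc : b * c < a * c + b) (K : ℕ) {m : ℤ}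
    (hm : 1 ≤ m) : laplacian a b (staircase c K) m < a + b := by
  rw [laplacian_eq_drop, drop_staircase, drop_staircase]
  have hab' : (a : ℤ) < b := mod_cast hab
  have hc' : (b : ℤ) * c < a * c + b := mod_cast hc
  rcases le_or_gt m c with h | h
  · have hslope : ((b : ℤ) - a) * (c + 1 - m) ≤ (b - a) * c := by
      gcongr
      omega
    rw [Int.toNat_of_nonneg (by omega), Int.toNat_of_nonneg (by omega)]
    linarith [hslope, hc']
  · rw [Int.toNat_of_nonpos (by omega), Int.toNat_of_nonpos (by omega)]
    push_cast
    linarith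

/-! ### Odometers -/

namespace IsOdometer

variable {S T : Set ℤ} {η η' σ τ u v : ℤ →₀ ℕ}

lemma eq_add_laplacian (h : IsOdometer a b S η σ u) {m : ℤ} (hm : m ∈ S) :
    (σ m : ℤ) = η m + laplacian a b u m := by
  induction h with
  | zero hσ => simp [hσ m hm, laplacian]
  | fire _ _ hσ' ih => rw [hσ' m hm, ih, Finsupp.coe_add, laplacian_add, add_assoc]

lemma restrict (h : IsOdometer a b T η σ u) (hST : S ⊆ T) (hη : ∀ m ∈ S, η m = η' m) :
    IsOdometer a b S η' σ u := by
  induction h with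
  | zero hσ => exact zero fun m hm => (hσ m (hST hm)).trans (hη m hm)
  | fire _ hi hσ' ih => exact fire ih (fun h => hi (hST h)) fun m hm => hσ' m (hST hm)

/-- Least action principle. -/
theorem le_of_stabilizing (h : IsOdometer a b S η σ u) {V : ℤ → ℕ}
    (hV : ∀ m ∈ S, η m + laplacian a b V m < a + b)
    (hbdry : ∀ m ∉ S, (m - 1 ∈ S ∨ m + 1 ∈ S) → u m ≤ V m) {m : ℤ} (hm : m ∈ S) : u m ≤ V m := by
  induction h generalizing m with
  | zero => simp
  | @fire σ σ' u i h hi hσ' ih =>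
    have hle : ∀ j ∈ S, u j ≤ V j := fun j hj =>
      ih (fun j hj hj' => (Nat.le_add_right _ _).trans (hbdry j hj hj')) hj
    obtain rfl | hmi := eq_or_ne m i
    · have hnear : ∀ j, (j - 1 = m ∨ j + 1 = m) → u j ≤ V j := fun j hj => by
        by_cases hjS : j ∈ S
        · exact hle j hjS
        · refine (Nat.le_add_right _ _).trans (hbdry j hjS ?_)
          rcases hj with rfl | rfl <;> simp [hm]
      have hne : u m ≠ V m := fun heq => by
        have hlap := laplacian_le_laplacian (a := a) (b := b) (hnear (m - 1) (by simp)) heq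
          (hnear (m + 1) (by simp))
        have hσm := h.eq_add_laplacian hm
        have hVm := hV m hm
        have hfire := hi hm
        omega
      simpa using (hle m hm).lt_of_ne hne
    · simpa [Ne.symm hmi] using hle m hm

theorem le_of_le_init (h : IsOdometer a b univ η σ u) (h' : IsOdometer a b univ η' τ v)
    (hτ : ∀ m, τ m < a + b) (hη : η ≤ η') : u ≤ v := fun m => by
  refine h.le_of_stabilizing (fun j _ => ?_) (fun j hj => absurd (mem_univ j) hj) (mem_univ m)
  have hτj := h'.eq_add_laplacian (mem_univ j)
  have := hτ j
  have := hη j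
  omega

theorem le_drop_one (h : IsOdometer a b (Ici 1) 0 σ u) (hab : a < b) (hc : b * c < a * c + b)
    (hu : (c + 1).choose 2 ≤ u 0) : c ≤ drop u 1 := by
  obtain ⟨K, hK⟩ := Nat.exists_eq_add_of_le' hu
  have hle : u 1 ≤ staircase c K 1 := by
    refine h.le_of_stabilizing (fun m hm => ?_) (fun m hm hm' => ?_) self_mem_Ici
    · simpa using laplacian_staircase_lt hab hc K hm
    · simp only [mem_Ici] at hm hm'
      obtain rfl : m = 0 := by omega
      exact hK.le
  have hdrop := drop_staircase c K 1
  have hzero : staircase c K 0 = u 0 := hK.symm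
  rw [drop, sub_self, hzero, add_sub_cancel_right, Int.toNat_natCast] at hdrop
  rw [drop, sub_self]
  omega

theorem drop_one_eq_iff (h : IsOdometer a b (Ici 1) 0 σ u) (hσ : ∀ m, σ m < a + b) (hab : a < b)
    (hc : a * (c + 1) ≤ b * c) (hc' : b * c < a * c + b) :
    drop u 1 = c ↔ (c + 1).choose 2 ≤ u 0 := by
  have hlap : ∀ m, 1 ≤ m → laplacian a b u m = σ m := fun m hm => by
    simpa using (h.eq_add_laplacian hm).symm
  have hlt : ∀ m, 1 ≤ m → laplacian a b u m < a + b := fun m hm =>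
    (hlap m hm).trans_lt (mod_cast hσ m)
  have hnonneg : ∀ m, 1 ≤ m → 0 ≤ drop u m :=
    drop_nonneg (by omega) fun m hm => (hlap m hm).symm ▸ Int.natCast_nonneg _
  refine ⟨fun hd => ?_, fun hu => ?_⟩
  · exact choose_two_le_of_le_drop
      (fun m hm => drop_le_drop_add_one hab (hlt m hm) (hnonneg _ (by omega))) le_rfl hd.ge
  · exact (drop_le hc hlt 1 le_rfl).antisymm (h.le_drop_one hab hc' hu)

theorem statePolyR_eq_iff (h : IsOdometer a b (Ici 1) 0 σ u) (hσ : ∀ m, σ m < a + b) (ha : a ≠ 0)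
    (hab : a < b) (hc : a * (c + 1) ≤ b * c) (hc' : b * c < a * c + b) :
    statePolyR σ ((b : ℚ) / a) = a * c ↔ (c + 1).choose 2 ≤ u 0 := by
  have heval := statePolyR_eq_add_drop ha (by omega) fun m hm => h.eq_add_laplacian hm
  have hzero : statePolyR 0 ((b : ℚ) / a) = 0 := by simp [statePolyR]
  rw [← h.drop_one_eq_iff hσ hab hc hc', heval, hzero, zero_add,
    mul_right_inj' (Nat.cast_ne_zero.2 ha)]
  exact_mod_cast Iff.rfl

end IsOdometer

/-! ### Odometers of the chip-firing game and of the settlement sequence -/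

lemma fireAt_eq_add_laplacian {i : ℤ} {σ σ' : ℤ →₀ ℕ} (h : fireAt a b i σ σ') (m : ℤ) :
    (σ' m : ℤ) = σ m + laplacian a b (Finsupp.single i 1) m := by
  obtain ⟨hi, hl, hm, hr, hfar⟩ := h
  rw [laplacian_single_one]
  split_ifs with h₀ h₁ h₂
  · subst h₀; omega
  · subst h₁; omega
  · subst h₂; omega
  · simpa using hfar m h₂ h₀ h₁

lemma rfireAt_eq_add_laplacian {i : ℤ} {σ σ' : ℤ →₀ ℕ} (h : rfireAt a b i σ σ') {m : ℤ}
    (hm1 : 1 ≤ m) : (σ' m : ℤ) = σ m + laplacian a b (Finsupp.single i 1) m := by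
  obtain ⟨_, hi, -, hm, hr, hl, hfar⟩ := h
  rw [laplacian_single_one]
  split_ifs with h₀ h₁ h₂
  · subst h₀; omega
  · subst h₁; omega
  · subst h₂; have := hl hm1; omega
  · simpa using hfar m hm1 h₂ h₀ h₁

lemma exists_isOdometer_of_reaches {η σ : ℤ →₀ ℕ} (h : Reaches a b η σ) :
    ∃ u, IsOdometer a b univ η σ u := by
  induction h with
  | refl => exact ⟨0, .zero fun _ _ => rfl⟩
  | tail _ hfire ih =>
    obtain ⟨u, hu⟩ := ih
    obtain ⟨i, hi⟩ := hfire
    exact ⟨_, hu.fire (fun _ => hi.1) fun m _ => fireAt_eq_add_laplacian hi m⟩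

lemma IsOdometer.exists_of_settles {η σ τ u : ℤ →₀ ℕ} (h : IsOdometer a b (Ici 1) η σ u)
    (hτ : Settles a b σ τ) : ∃ v, IsOdometer a b (Ici 1) η τ v ∧ v 0 = u 0 := by
  obtain ⟨hστ, -⟩ := hτ
  induction hστ with
  | refl => exact ⟨u, h, rfl⟩
  | tail _ hfire ih =>
    obtain ⟨v, hv, hv0⟩ := ih
    obtain ⟨i, hi⟩ := hfire
    have hi0 : i ≠ 0 := by have := hi.1; omega
    exact ⟨_, hv.fire (fun _ => hi.2.1) fun m hm => rfireAt_eq_add_laplacian hi hm,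
      by simp [hv0, hi0]⟩

lemma exists_isOdometer_settlementSeq {ξ : ℕ → ℤ →₀ ℕ} (hξ : SettlementSeq a b ξ) (k : ℕ) :
    ∃ u, IsOdometer a b (Ici 1) 0 (ξ k) u ∧ u 0 = k := by
  induction k with
  | zero => exact ⟨0, .zero fun m _ => by rw [hξ.1], rfl⟩
  | succ k ih =>
    obtain ⟨u, hu, hu0⟩ := ih
    have hinject : IsOdometer a b (Ici 1) 0 (ξ k + Finsupp.single 1 b)
        (u + Finsupp.single 0 1) := by
      refine hu.fire (fun h => absurd h (by simp)) fun m hm => ?_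
      rw [mem_Ici] at hm
      rw [laplacian_single_one, Finsupp.add_apply, Finsupp.single_apply]
      split_ifs <;> omega
    obtain ⟨v, hv, hv0⟩ := hinject.exists_of_settles (hξ.2 k)
    exact ⟨v, hv, by simp [hv0, hu0]⟩

lemma settlementSeq_lt {ξ : ℕ → ℤ →₀ ℕ} (hξ : SettlementSeq a b ξ) (hb : 0 < b) (k : ℕ) (m : ℤ) :
    ξ k m < a + b := by
  cases k with
  | zero => rw [hξ.1, Finsupp.zero_apply]; omega
  | succ k => exact (hξ.2 k).2 m

lemma exists_isOdometer_of_isFinalState {n : ℕ} {σ : ℤ →₀ ℕ} (h : IsFinalState a b n σ) :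
    ∃ u, IsOdometer a b univ (initState n) σ u ∧ IsOdometer a b (Ici 1) 0 σ u := by
  obtain ⟨u, hu⟩ := exists_isOdometer_of_reaches h.1
  refine ⟨u, hu, hu.restrict (subset_univ _) fun m hm => ?_⟩
  rw [initState, Finsupp.single_eq_of_ne (by rw [mem_Ici] at hm; omega), Finsupp.zero_apply]

/-! ### Arithmetic of the thresholds -/

lemma mul_bounds_of_eq_ceil (hab : a < b) (hc : (c : ℤ) = ⌈(a : ℚ) / ((b : ℚ) - (a : ℚ))⌉) :
    a * (c + 1) ≤ b * c ∧ b * c < a * c + b := by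
  have hpos : (0 : ℚ) < b - a := sub_pos.2 (mod_cast hab)
  obtain ⟨hlt, hle⟩ := Int.ceil_eq_iff.1 hc.symm
  rw [Int.cast_natCast, lt_div_iff₀ hpos] at hlt
  rw [Int.cast_natCast, div_le_iff₀ hpos] at hle
  constructor
  · have : (a : ℚ) * (c + 1) ≤ b * c := by linarith
    exact_mod_cast this
  · have : (b : ℚ) * c < a * c + b := by linarith
    exact_mod_cast this

lemma le_choose_three_add_two (n : ℕ) : n ≤ n.choose 3 + 2 := by
  induction n with
  | zero => simp
  | succ n ih =>
    have hpascal : (n + 1).choose 3 = n.choose 2 + n.choose 3 := Nat.choose_succ_succ' n 2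
    rcases lt_or_ge n 2 with hn | hn
    · omega
    · have := Nat.choose_pos hn
      omega

lemma choose_two_le_choose_three_add_two (n : ℕ) : n.choose 2 ≤ n.choose 3 + 2 := by
  cases n with
  | zero => simp
  | succ n =>
    have hpascal : (n + 1).choose 3 = n.choose 2 + n.choose 3 := Nat.choose_succ_succ' n 2
    have := le_choose_three_add_two n
    rw [choose_succ_two]
    omega

lemma Te_eq_choose (m : ℕ) : Te m = (m + 2).choose 3 := by
  rw [Te, Nat.choose_eq_descFactorial_div_factorial]
  simp only [Nat.descFactorial_succ, Nat.descFactorial_zero]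
  norm_num [Nat.factorial]
  congr 1
  ring

lemma choose_two_le_of_Te_lt {k : ℕ} (hk : Te (c - 1) + 1 < k) : (c + 1).choose 2 ≤ k := by
  rcases c with _ | c
  · simp
  · rw [Te_eq_choose, Nat.add_sub_cancel] at hk
    have := choose_two_le_choose_three_add_two (c + 2)
    exact this.trans (by omega)

end ChipFiring

open ChipFiring in
theorem stmt17_general {a b c k N n : ℕ} (ha : 0 < a) (hab : a < b)
    (hc : (c : ℤ) = ⌈(a : ℚ) / ((b : ℚ) - (a : ℚ))⌉)
    {ξ : ℕ → ℤ →₀ ℕ} (hξ : SettlementSeq a b ξ) (hk : (c + 1).choose 2 ≤ k)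
    {σ τ : ℤ →₀ ℕ} (hσ : IsFinalState a b N σ) (hσξ : ∀ m : ℤ, 1 ≤ m → σ m = ξ k m)
    (hτ : IsFinalState a b n τ) (hNn : N ≤ n) :
    statePolyR τ ((b : ℚ) / a) = (a : ℚ) * c ∧
      statePolyL τ ((b : ℚ) / a) = (n : ℚ) - (a : ℚ) * c := by
  obtain ⟨hc₁, hc₂⟩ := mul_bounds_of_eq_ceil hab hc
  obtain ⟨w, hw, hw0⟩ := exists_isOdometer_settlementSeq hξ k
  obtain ⟨u, huZ, hu⟩ := exists_isOdometer_of_isFinalState hσ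
  obtain ⟨v, hvZ, hv⟩ := exists_isOdometer_of_isFinalState hτ
  have hξR : statePolyR (ξ k) ((b : ℚ) / a) = a * c :=
    (hw.statePolyR_eq_iff (settlementSeq_lt hξ (by omega) k) ha.ne' hab hc₁ hc₂).2 (hw0 ▸ hk)
  have hu0 : (c + 1).choose 2 ≤ u 0 :=
    (hu.statePolyR_eq_iff hσ.2 ha.ne' hab hc₁ hc₂).1 ((statePolyR_congr hσξ _).trans hξR)
  have huv : u ≤ v := huZ.le_of_le_init hvZ hτ.2 (Finsupp.single_mono hNn)
  have hv0 : (c + 1).choose 2 ≤ v 0 := hu0.trans (huv 0)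
  have hL := statePolyL_eq_sub_drop ha.ne' (by omega) fun m _ => hvZ.eq_add_laplacian (mem_univ m)
  rw [statePolyL_initState, (hv.drop_one_eq_iff hτ.2 hab hc₁ hc₂).2 hv0, Int.cast_natCast] at hL
  exact ⟨(hv.statePolyR_eq_iff hτ.2 ha.ne' hab hc₁ hc₂).2 hv0, hL⟩

/-- For `n ≥ B` (the balanced number), `S_{φ(n)^R}(b/a) = a·c`
and `S_{φ(n)^L}(b/a) = n - a·c`, where `c = ⌈a/(b-a)⌉`. -/
theorem stmt17 (a b : ℕ) (ha : 0 < a) (hab : a < b) (hcop : Nat.Coprime a b)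
    (c : ℕ) (hc : (c : ℤ) = ⌈(a : ℚ) / ((b : ℚ) - (a : ℚ))⌉)
    (ξ : ℕ → ℤ →₀ ℕ) (hξ : SettlementSeq a b ξ)
    (φ : ℕ → ℤ →₀ ℕ) (hφ : ∀ n : ℕ, IsFinalState a b n (φ n))
    (B : ℕ)
    (hB : (∃ k : ℕ, Te (c - 1) + 1 < k ∧ ∀ m : ℤ, 1 ≤ m → φ B m = ξ k m) ∧
      ∀ n : ℕ, n < B →
        ¬ ∃ k : ℕ, Te (c - 1) + 1 < k ∧ ∀ m : ℤ, 1 ≤ m → φ n m = ξ k m) :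
    ∀ n : ℕ, B ≤ n →
      statePolyR (φ n) ((b : ℚ) / a) = (a : ℚ) * c ∧
      statePolyL (φ n) ((b : ℚ) / a) = (n : ℚ) - (a : ℚ) * c := by
  obtain ⟨⟨k, hk, hBk⟩, -⟩ := hB
  exact fun n hn => stmt17_general ha hab hc hξ (ChipFiring.choose_two_le_of_Te_lt hk)
    (hφ B) hBk (hφ n) hn
end
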